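/- arXiv:2305.03579 — 2 statements merged into one kernel-verified Lean document; each statement's English description precedes it below -/
import Mathlib

section
/- Let U ⊆ ℝ⁴ be a nonempty open connected (e.g. convex) set and let D : U → ℝ be smooth with D > 0 on U. If the Ricci tensor of the reduced Lychagin–Rubtsov metric G_D (computed from the coordinate Christoffel symbols and curvature tensor) vanishes identically on U, then there exist constants c₁, …, c₆ ∈ ℝ with c₂c₄ + c₃c₅ − c₁c₆ = 0 such that, setting L(x,y,p,q) = c₁ + c₂x + c₃y + c₄p + c₅q + c₆(xp + yq), one has L ≠ 0 on U and D = L⁻² on U. -/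
/-- Partial derivative of `f : ℝ⁴ → ℝ` in the `i`-th coordinate direction. -/
noncomputable def pd (i : Fin 4) (f : (Fin 4 → ℝ) → ℝ) (u : Fin 4 → ℝ) : ℝ :=
  fderiv ℝ f u (Pi.single i 1)

/-- Christoffel symbols `Γᵏᵢⱼ` of a matrix-valued metric `g` in coordinates. -/
noncomputable def christoffel (g : (Fin 4 → ℝ) → Matrix (Fin 4) (Fin 4) ℝ)
    (k i j : Fin 4) (u : Fin 4 → ℝ) : ℝ :=
  (1 / 2) * ∑ l, (g u)⁻¹ k l *
    (pd i (fun v => g v j l) u + pd j (fun v => g v i l) u - pd l (fun v => g v i j) u)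

/-- Curvature tensor `Rˡᵢⱼₖ` of a matrix-valued metric `g` in coordinates. -/
noncomputable def riemann (g : (Fin 4 → ℝ) → Matrix (Fin 4) (Fin 4) ℝ)
    (l i j k : Fin 4) (u : Fin 4 → ℝ) : ℝ :=
  pd j (christoffel g l i k) u - pd k (christoffel g l i j) u +
    ∑ m, (christoffel g l j m u * christoffel g m i k u -
          christoffel g l k m u * christoffel g m i j u)

/-- Ricci tensor `Ricᵢₖ = Σₗ Rˡᵢₗₖ`. -/
noncomputable def ricci (g : (Fin 4 → ℝ) → Matrix (Fin 4) (Fin 4) ℝ)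
    (i k : Fin 4) (u : Fin 4 → ℝ) : ℝ :=
  ∑ l, riemann g l i l k u

/-- Scalar curvature `R = Σᵢₖ (g⁻¹)ⁱᵏ Ricᵢₖ`. -/
noncomputable def scalarCurv (g : (Fin 4 → ℝ) → Matrix (Fin 4) (Fin 4) ℝ)
    (u : Fin 4 → ℝ) : ℝ :=
  ∑ i, ∑ k, (g u)⁻¹ i k * ricci g i k u

/-- The reduced Lychagin–Rubtsov metric associated with `D : ℝ⁴ → ℝ`. -/
noncomputable def GD (D : (Fin 4 → ℝ) → ℝ) (u : Fin 4 → ℝ) :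
    Matrix (Fin 4) (Fin 4) ℝ :=
  !![0, 0, D u, 0;
     0, 0, 0, D u;
     D u, 0, 0, 0;
     0, D u, 0, 0]

/-!
Write `D = exp(-2ℓ)`, so that `G_D = exp(-2ℓ)η` for a constant form `η` of split signature. Then
`Ric = 2(∇²ℓ + ∇ℓ ⊗ ∇ℓ) + (Δℓ - 2|∇ℓ|²)η`, with `Δ` and `|·|` taken with respect to `η`.
Tracing `Ric = 0` determines `Δℓ`, and what remains says that `L = exp(ℓ)` has Hessian `μη` with
`μ = |∇L|²/(2L)`. The third derivatives of `L` are symmetric, which forces `μ` to be a constant `m`,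
so `L` is a quadratic polynomial `m/2 η(u, u) + b(u) + c`. The identity `|∇L|² = 2mL` then reads
`|b|² = 2mc`, which is the Plücker relation.
-/

open Filter Topology Matrix Real

section Quadratic

variable {E G : Type*} [NormedAddCommGroup E] [NormedSpace ℝ E]
  [NormedAddCommGroup G] [NormedSpace ℝ G] {U : Set E} {μ : E → ℝ}

theorem fderiv_eq_zero_of_fderiv_eq_smul {F : E → G} {B : E →L[ℝ] G} {u : E}
    (hE : 1 < Module.rank ℝ E) (hB : Function.Injective B) (hF : ContDiffAt ℝ 2 F u)
    (hμ : DifferentiableAt ℝ μ u) (hFμ : fderiv ℝ F =ᶠ[𝓝 u] fun v => μ v • B) :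
    fderiv ℝ μ u = 0 := by
  have hF'' (v w : E) : fderiv ℝ (fderiv ℝ F) u v w = fderiv ℝ μ u v • B w := by
    simp [hFμ.fderiv_eq, (hμ.hasFDerivAt.smul_const B).fderiv]
  -- `F''(v, w) = μ'(v) B w` is symmetric in `v` and `w`.
  have hker (v w : E) : fderiv ℝ μ u v • w = fderiv ℝ μ u w • v := hB <| by
    simpa only [map_smul, hF''] using hF.isSymmSndFDerivAt (by simp) v w
  ext v
  by_contra hv
  have hv₀ : v ≠ 0 := fun h => hv (by simp [h])
  obtain ⟨w, hvw⟩ := exists_linearIndependent_pair_of_one_lt_rank hE hv₀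
  refine hv (LinearIndependent.pair_iff.1 hvw (-fderiv ℝ μ u w) (fderiv ℝ μ u v) ?_).2
  rw [hker v w, neg_smul, neg_add_cancel]

theorem exists_eq_add_smul_of_fderiv_eq_smul {F : E → G} {B : E →L[ℝ] G}
    (hE : 1 < Module.rank ℝ E) (hB : Function.Injective B) (hU : IsOpen U)
    (hUconn : IsPreconnected U) (hF : ContDiffOn ℝ 2 F U) (hμ : DifferentiableOn ℝ μ U)
    (hFμ : ∀ u ∈ U, fderiv ℝ F u = μ u • B) :
    ∃ (m : ℝ) (c : G), ∀ u ∈ U, μ u = m ∧ F u = m • B u + c := by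
  obtain ⟨m, hm⟩ := hU.exists_is_const_of_fderiv_eq_zero hUconn hμ fun u hu =>
    fderiv_eq_zero_of_fderiv_eq_smul hE hB (hF.contDiffAt (hU.mem_nhds hu))
      (hμ.differentiableAt (hU.mem_nhds hu)) (eventually_of_mem (hU.mem_nhds hu) hFμ)
  obtain ⟨c, hc⟩ := hU.exists_eq_add_of_fderiv_eq hUconn (hF.differentiableOn two_ne_zero)
    (m • B).differentiableOn fun u hu => by rw [hFμ u hu, hm u hu, (m • B).fderiv]
  exact ⟨m, c, fun u hu => ⟨hm u hu, hc hu⟩⟩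

theorem exists_eq_quadratic_of_fderiv_fderiv_eq_smul {f : E → ℝ} {B : E →L[ℝ] E →L[ℝ] ℝ}
    (hE : 1 < Module.rank ℝ E) (hB : Function.Injective B) (hBsymm : ∀ v w, B v w = B w v)
    (hU : IsOpen U) (hUconn : IsPreconnected U) (hf : ContDiffOn ℝ 3 f U)
    (hμ : DifferentiableOn ℝ μ U) (hfμ : ∀ u ∈ U, fderiv ℝ (fderiv ℝ f) u = μ u • B) :
    ∃ (m : ℝ) (b : E →L[ℝ] ℝ) (c : ℝ), ∀ u ∈ U,
      μ u = m ∧ fderiv ℝ f u = m • B u + b ∧ f u = m / 2 * B u u + b u + c := by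
  obtain ⟨m, b, hmb⟩ := exists_eq_add_smul_of_fderiv_eq_smul hE hB hU hUconn
    (hf.fderiv_of_isOpen hU (by norm_num)) hμ hfμ
  have hq (u : E) : HasFDerivAt (fun v => m / 2 * B v v + b v) (m • B u + b) u := by
    refine (((B.hasFDerivAt.clm_apply (hasFDerivAt_id u)).const_mul (m / 2)).add
      b.hasFDerivAt).congr_fderiv ?_
    ext v
    simp only [ContinuousLinearMap.comp_id, id_eq, smul_add, _root_.add_apply, _root_.smul_apply,
      smul_eq_mul, ContinuousLinearMap.flip_apply, hBsymm v u, add_left_inj]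
    ring
  obtain ⟨c, hc⟩ := hU.exists_eq_add_of_fderiv_eq hUconn (hf.differentiableOn three_ne_zero)
    (fun u _ => (hq u).differentiableAt.differentiableWithinAt)
    fun u hu => by rw [(hmb u hu).2, (hq u).fderiv]
  exact ⟨m, b, c, fun u hu => ⟨(hmb u hu).1, (hmb u hu).2, hc hu⟩⟩

end Quadratic

section Algebra

variable {ι R : Type*} [Fintype ι] [DecidableEq ι] [CommRing R] (η : Matrix ι ι R)

/-- The Christoffel symbol `Γᵏᵢⱼ` of the conformally flat metric `exp(-2ℓ)η`, as a linear map of the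
gradient of `ℓ`, so that the derivatives of `Γᵏᵢⱼ` are its values at the rows of the Hessian. -/
noncomputable def conformalSymbol (k i j : ι) : (ι → R) →ₗ[R] R :=
  η i j • LinearMap.proj k ∘ₗ η⁻¹.mulVecLin - (1 : Matrix ι ι R) k i • LinearMap.proj j
    - (1 : Matrix ι ι R) k j • LinearMap.proj i

theorem conformalSymbol_apply (k i j : ι) (a : ι → R) :
    conformalSymbol η k i j a = η i j * (η⁻¹ *ᵥ a) k - (1 : Matrix ι ι R) k i * a j
      - (1 : Matrix ι ι R) k j * a i := by
  simp [conformalSymbol]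

variable {η}

theorem sum_mul_inv_mulVec (hdet : IsUnit η.det) (i : ι) (a : ι → R) :
    ∑ l, η i l * (η⁻¹ *ᵥ a) l = a i := by
  change (η *ᵥ η⁻¹ *ᵥ a) i = a i
  rw [mulVec_mulVec, mul_nonsing_inv _ hdet, one_mulVec]

theorem sum_conformalSymbol_self (hdet : IsUnit η.det) (i : ι) (a : ι → R) :
    ∑ l, conformalSymbol η l i l a = -(Fintype.card ι * a i) := by
  simp [conformalSymbol_apply, Finset.sum_sub_distrib, sum_mul_inv_mulVec hdet, one_apply]

theorem conformalSymbol_comm (hη : η.IsSymm) (k i j : ι) (a : ι → R) :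
    conformalSymbol η k i j a = conformalSymbol η k j i a := by
  rw [conformalSymbol_apply, conformalSymbol_apply, hη.apply]
  ring

theorem sum_conformalSymbol_row (b : Matrix ι ι R) (i k : ι) :
    ∑ l, conformalSymbol η l i k (b l) = η i k * (η⁻¹ * bᵀ).trace - b i k - b k i := by
  simp [conformalSymbol_apply, Finset.sum_sub_distrib, one_apply, ← Finset.mul_sum, trace,
    mul_apply, mulVec, dotProduct]

theorem sum_mul_conformalSymbol (i k : ι) (a : ι → R) :
    ∑ m, a m * conformalSymbol η m i k a = η i k * (a ⬝ᵥ η⁻¹ *ᵥ a) - 2 * (a i * a k) := by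
  simp only [conformalSymbol_apply, one_apply, ite_mul, one_mul, zero_mul, mul_sub, mul_left_comm,
    mul_ite, mul_zero, Finset.sum_sub_distrib, Finset.sum_ite_eq', Finset.mem_univ, ↓reduceIte,
    dotProduct, Finset.mul_sum]
  ring

theorem sum_mul_conformalSymbol_lower (hdet : IsUnit η.det) (k i j : ι) (a : ι → R) :
    ∑ m, η k m * conformalSymbol η m i j a = η i j * a k - η k i * a j - η k j * a i := by
  simp [conformalSymbol_apply, mul_sub, Finset.sum_sub_distrib, one_apply, mul_left_comm _ (η i j),
    ← Finset.mul_sum, sum_mul_inv_mulVec hdet]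

theorem sum_sum_conformalSymbol_mul (hη : η.IsSymm) (hdet : IsUnit η.det) (i k : ι) (a : ι → R) :
    ∑ l, ∑ m, conformalSymbol η l k m a * conformalSymbol η m i l a =
      (Fintype.card ι + 2) * (a i * a k) - 2 * (η i k * (a ⬝ᵥ η⁻¹ *ᵥ a)) := by
  have hinner (l : ι) : ∑ m, conformalSymbol η l k m a * conformalSymbol η m i l a =
      (η⁻¹ *ᵥ a) l * (η l i * a k - η i k * a l - η k l * a i)
        - (1 : Matrix ι ι R) l k * ∑ m, a m * conformalSymbol η m i l a
        - a k * conformalSymbol η l i l a := by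
    simp only [conformalSymbol_apply η l k, sub_mul, Finset.sum_sub_distrib]
    rw [hη.apply i l, hη.apply k i, ← sum_mul_conformalSymbol_lower hdet]
    simp [one_apply, Finset.mul_sum, mul_assoc, mul_left_comm]
  have hnorm : ∑ l, (η⁻¹ *ᵥ a) l * (η l i * a k - η i k * a l - η k l * a i) =
      -(η i k * (a ⬝ᵥ η⁻¹ *ᵥ a)) := by
    calc
      _ = (∑ l, η i l * (η⁻¹ *ᵥ a) l) * a k - η i k * (a ⬝ᵥ η⁻¹ *ᵥ a)
          - (∑ l, η k l * (η⁻¹ *ᵥ a) l) * a i := by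
        rw [dotProduct, Finset.mul_sum, Finset.sum_mul, Finset.sum_mul, ← Finset.sum_sub_distrib,
          ← Finset.sum_sub_distrib]
        exact Finset.sum_congr rfl fun l _ => by rw [hη.apply l i]; ring
      _ = _ := by rw [sum_mul_inv_mulVec hdet, sum_mul_inv_mulVec hdet]; ring
  simp only [hinner, Finset.sum_sub_distrib, hnorm, one_apply, ite_mul, one_mul, zero_mul,
    Finset.sum_ite_eq', Finset.mem_univ, if_true, ← Finset.mul_sum]
  rw [sum_mul_conformalSymbol, sum_conformalSymbol_self hdet]
  ring

theorem sum_ricci_conformalSymbol (hη : η.IsSymm) (hdet : IsUnit η.det) {b : Matrix ι ι R}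
    (hb : b.IsSymm) (i k : ι) (a : ι → R) :
    ∑ l, (conformalSymbol η l i k (b l) - conformalSymbol η l i l (b k) +
      ∑ m, (conformalSymbol η l l m a * conformalSymbol η m i k a -
        conformalSymbol η l k m a * conformalSymbol η m i l a)) =
      (Fintype.card ι - 2) * (b i k + a i * a k) + η i k *
        ((η⁻¹ * b).trace - (Fintype.card ι - 2) * (a ⬝ᵥ η⁻¹ *ᵥ a)) := by
  have hcontract : ∑ l, ∑ m, conformalSymbol η l l m a * conformalSymbol η m i k a =
      -(Fintype.card ι * (η i k * (a ⬝ᵥ η⁻¹ *ᵥ a) - 2 * (a i * a k))) := by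
    rw [Finset.sum_comm, ← sum_mul_conformalSymbol, Finset.mul_sum, ← Finset.sum_neg_distrib]
    refine Finset.sum_congr rfl fun m _ => ?_
    rw [← Finset.sum_mul, Finset.sum_congr rfl fun l _ => conformalSymbol_comm hη l l m a,
      sum_conformalSymbol_self hdet]
    ring
  simp only [Finset.sum_add_distrib, Finset.sum_sub_distrib]
  rw [sum_conformalSymbol_row, sum_conformalSymbol_self hdet, hcontract,
    sum_sum_conformalSymbol_mul hη hdet, hb.eq, hb.apply i k]
  ring

theorem add_vecMulVec_eq_smul_of_ricci_eq_zero {K : Type*} [Field K] [CharZero K] {η : Matrix ι ι K}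
    (hdet : IsUnit η.det) (hcard : 2 < Fintype.card ι) {b : Matrix ι ι K} {a : ι → K}
    (hRic : ((Fintype.card ι : K) - 2) • (b + vecMulVec a a) +
      ((η⁻¹ * b).trace - ((Fintype.card ι : K) - 2) * (a ⬝ᵥ η⁻¹ *ᵥ a)) • η = 0) :
    b + vecMulVec a a = ((a ⬝ᵥ η⁻¹ *ᵥ a) / 2) • η := by
  have hcard₂ : (Fintype.card ι : K) - 2 ≠ 0 := sub_ne_zero.2 (by exact_mod_cast hcard.ne')
  have hcard₁ : (Fintype.card ι : K) - 1 ≠ 0 :=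
    sub_ne_zero.2 (by exact_mod_cast (one_lt_two.trans hcard).ne')
  have htrace : (η⁻¹ * b).trace = (Fintype.card ι - 2) * (a ⬝ᵥ η⁻¹ *ᵥ a) / 2 := by
    have := congrArg (fun M => (η⁻¹ * M).trace) hRic
    simp only [Matrix.mul_add, mul_smul_comm, trace_add, trace_smul, mul_vecMulVec,
      trace_vecMulVec, nonsing_inv_mul _ hdet, trace_one, smul_eq_mul, Matrix.mul_zero, trace_zero,
      dotProduct_comm (η⁻¹ *ᵥ a)] at this
    refine mul_left_cancel₀ hcard₁ ?_
    linear_combination this / 2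
  refine smul_right_injective _ hcard₂ (?_ : _ • _ = _ • _)
  rw [htrace] at hRic
  rw [eq_neg_of_add_eq_zero_left hRic, smul_smul, ← neg_smul]
  congr 1
  ring

theorem dotProduct_inv_mulVec_smul_add (hη : η.IsSymm) (hdet : IsUnit η.det) (m : R) (u b : ι → R) :
    (m • (η *ᵥ u) + b) ⬝ᵥ η⁻¹ *ᵥ (m • (η *ᵥ u) + b) =
      m ^ 2 * (u ⬝ᵥ η *ᵥ u) + 2 * m * (b ⬝ᵥ u) + b ⬝ᵥ η⁻¹ *ᵥ b := by
  have hinv : η⁻¹ *ᵥ (m • (η *ᵥ u) + b) = m • u + η⁻¹ *ᵥ b := by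
    rw [mulVec_add, mulVec_smul, mulVec_mulVec, nonsing_inv_mul _ hdet, one_mulVec]
  have hcross : η *ᵥ u ⬝ᵥ η⁻¹ *ᵥ b = b ⬝ᵥ u := by
    rw [dotProduct_comm, dotProduct_mulVec, ← mulVec_transpose, hη.eq, mulVec_mulVec,
      mul_nonsing_inv _ hdet, one_mulVec]
  simp only [hinv, add_dotProduct, dotProduct_add, smul_dotProduct, dotProduct_smul, smul_eq_mul,
    hcross, dotProduct_comm (η *ᵥ u) u]
  ring

end Algebra

section Coordinates

variable {f : (Fin 4 → ℝ) → ℝ} {u : Fin 4 → ℝ}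

theorem pd_congr {g : (Fin 4 → ℝ) → ℝ} (h : f =ᶠ[𝓝 u] g) (i : Fin 4) : pd i f u = pd i g u := by
  rw [pd, pd, h.fderiv_eq]

theorem pd_linearMap_comp {a : (Fin 4 → ℝ) → Fin 4 → ℝ} (φ : (Fin 4 → ℝ) →ₗ[ℝ] ℝ)
    (ha : DifferentiableAt ℝ a u) (i : Fin 4) :
    pd i (fun v => φ (a v)) u = φ fun j => pd i (fun v => a v j) u := by
  have hφ := (φ.toContinuousLinearMap.hasFDerivAt.comp u ha.hasFDerivAt).fderiv
  change fderiv ℝ (φ.toContinuousLinearMap ∘ a) u (Pi.single i 1) = _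
  rw [hφ]
  simp only [pd, fderiv_apply ha]
  rfl

theorem pd_comp {φ : ℝ → ℝ} {φ' : ℝ} (hφ : HasDerivAt φ φ' (f u)) (hf : DifferentiableAt ℝ f u)
    (i : Fin 4) : pd i (fun v => φ (f v)) u = φ' * pd i f u := by
  change fderiv ℝ (φ ∘ f) u (Pi.single i 1) = _
  rw [(hφ.comp_hasFDerivAt u hf.hasFDerivAt).fderiv]
  rfl

theorem pd_mul {g : (Fin 4 → ℝ) → ℝ} (hf : DifferentiableAt ℝ f u) (hg : DifferentiableAt ℝ g u)
    (i : Fin 4) : pd i (fun v => f v * g v) u = pd i f u * g u + f u * pd i g u := by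
  simp only [pd, fderiv_fun_mul hf hg, _root_.add_apply, _root_.smul_apply, smul_eq_mul]
  ring

/-- The coordinate gradient (covector) of `f` at `u`, with entries `∂ᵢf`; no metric is involved. -/
noncomputable def grad (f : (Fin 4 → ℝ) → ℝ) (u : Fin 4 → ℝ) : Fin 4 → ℝ :=
  fun i => pd i f u

/-- The coordinate Hessian matrix of `f` at `u`, with entries `∂ᵢ∂ⱼf` for the flat connection. -/
noncomputable def hess (f : (Fin 4 → ℝ) → ℝ) (u : Fin 4 → ℝ) : Matrix (Fin 4) (Fin 4) ℝ :=
  Matrix.of fun i j => pd i (pd j f) u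

theorem hess_apply (hf : ContDiffAt ℝ 2 f u) (i j : Fin 4) :
    hess f u i j = fderiv ℝ (fderiv ℝ f) u (Pi.single i 1) (Pi.single j 1) := by
  have hd : DifferentiableAt ℝ (fderiv ℝ f) u :=
    (hf.fderiv_right (m := 1) (by norm_num)).differentiableAt one_ne_zero
  have := (hd.hasFDerivAt.clm_apply (hasFDerivAt_const (Pi.single j (1 : ℝ)) u)).fderiv
  change fderiv ℝ (fun v => fderiv ℝ f v (Pi.single j 1)) u (Pi.single i 1) = _
  simp [this]

theorem hess_isSymm (hf : ContDiffAt ℝ 2 f u) : (hess f u).IsSymm :=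
  IsSymm.ext fun i j => by
    rw [hess_apply hf, hess_apply hf]
    exact hf.isSymmSndFDerivAt (by simp) _ _

theorem differentiableAt_grad (hf : ContDiffAt ℝ 2 f u) : DifferentiableAt ℝ (grad f) u :=
  differentiableAt_pi.2 fun i =>
    ((hf.fderiv_right (m := 1) (by norm_num)).differentiableAt one_ne_zero).clm_apply
      (differentiableAt_const (Pi.single i 1))

theorem grad_exp (hf : DifferentiableAt ℝ f u) :
    grad (fun v => exp (f v)) u = exp (f u) • grad f u :=
  funext fun i => pd_comp (hasDerivAt_exp _) hf i

theorem hess_exp (hf : ContDiffAt ℝ 2 f u) :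
    hess (fun v => exp (f v)) u =
      exp (f u) • (hess f u + vecMulVec (grad f u) (grad f u)) := by
  ext i j
  have hd : ∀ᶠ v in 𝓝 u, DifferentiableAt ℝ f v :=
    (hf.eventually (by simp)).mono fun v hv => hv.differentiableAt two_ne_zero
  have hgrad : pd j (fun v => exp (f v)) =ᶠ[𝓝 u] fun v => exp (f v) * pd j f v :=
    hd.mono fun v hv => pd_comp (hasDerivAt_exp _) hv j
  have hpd : DifferentiableAt ℝ (pd j f) u := differentiableAt_pi.1 (differentiableAt_grad hf) j
  change pd i (pd j fun v => exp (f v)) u = _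
  rw [pd_congr hgrad, pd_mul hd.self_of_nhds.exp hpd, pd_comp (hasDerivAt_exp _) hd.self_of_nhds]
  simp only [hess, Matrix.smul_apply, Matrix.add_apply, of_apply, vecMulVec_apply, grad,
    smul_eq_mul]
  ring

theorem fderiv_fderiv_eq_of_hess_eq {η : Matrix (Fin 4) (Fin 4) ℝ} (hf : ContDiffAt ℝ 2 f u)
    (h : hess f u = η) : fderiv ℝ (fderiv ℝ f) u = (toBilin' η).toContinuousBilinearMap := by
  refine ContinuousLinearMap.coe_injective (LinearMap.pi_ext' fun i => LinearMap.ext_ring ?_)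
  refine ContinuousLinearMap.coe_injective (LinearMap.pi_ext' fun j => LinearMap.ext_ring ?_)
  simp [← h, hess_apply hf]

theorem exists_eq_quadratic_of_hess_eq_smul {η : Matrix (Fin 4) (Fin 4) ℝ} (hη : η.IsSymm)
    (hdet : IsUnit η.det) {U : Set (Fin 4 → ℝ)} (hU : IsOpen U) (hUconn : IsPreconnected U)
    {μ : (Fin 4 → ℝ) → ℝ} (hf : ContDiffOn ℝ 3 f U) (hμ : DifferentiableOn ℝ μ U)
    (hfμ : ∀ u ∈ U, hess f u = μ u • η) :
    ∃ (m : ℝ) (b : Fin 4 → ℝ) (c : ℝ), ∀ u ∈ U,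
      μ u = m ∧ grad f u = m • (η *ᵥ u) + b ∧ f u = m / 2 * (u ⬝ᵥ η *ᵥ u) + b ⬝ᵥ u + c := by
  set B := (toBilin' η).toContinuousBilinearMap
  have hBapply (v w : Fin 4 → ℝ) : B v w = v ⬝ᵥ η *ᵥ w := toBilin'_apply' η v w
  have hBsymm (v w : Fin 4 → ℝ) : B v w = B w v := by
    rw [hBapply, hBapply, dotProduct_mulVec, ← mulVec_transpose, hη.eq, dotProduct_comm]
  have hBinj : Function.Injective B := by
    refine (injective_iff_map_eq_zero B).2 fun v hv => ?_
    refine eq_zero_of_mulVec_eq_zero hdet.ne_zero (funext fun i => ?_)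
    simpa [hBapply] using (hBsymm (Pi.single i 1) v).trans (congrArg (· (Pi.single i 1)) hv)
  obtain ⟨m, b, c, hmbc⟩ := exists_eq_quadratic_of_fderiv_fderiv_eq_smul
    (by simp) hBinj hBsymm hU hUconn hf hμ fun u hu => by
      rw [fderiv_fderiv_eq_of_hess_eq
        ((hf.contDiffAt (hU.mem_nhds hu)).of_le (by norm_num)) (hfμ u hu), map_smul]
      rfl
  have hb (u : Fin 4 → ℝ) : b u = (fun i => b (Pi.single i 1)) ⬝ᵥ u := by
    conv_lhs => rw [pi_eq_sum_univ' u]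
    simp [dotProduct, mul_comm]
  refine ⟨m, fun i => b (Pi.single i 1), c, fun u hu => ?_⟩
  obtain ⟨hμu, hgrad, hfu⟩ := hmbc u hu
  refine ⟨hμu, funext fun i => ?_, by rw [hfu, hBapply, hb]⟩
  simp [grad, pd, hgrad, hBsymm u, hBapply]

end Coordinates

section ConformallyFlat

variable {η : Matrix (Fin 4) (Fin 4) ℝ} {g : (Fin 4 → ℝ) → Matrix (Fin 4) (Fin 4) ℝ}
  {ℓ : (Fin 4 → ℝ) → ℝ} {u : Fin 4 → ℝ}

theorem christoffel_eq_conformalSymbol (hη : η.IsSymm) (hdet : IsUnit η.det)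
    (hℓ : DifferentiableAt ℝ ℓ u) (hg : g =ᶠ[𝓝 u] fun v => exp (-2 * ℓ v) • η) (k i j : Fin 4) :
    christoffel g k i j u = conformalSymbol η k i j (grad ℓ u) := by
  have hpd (m i j : Fin 4) :
      pd m (fun v => g v i j) u = -2 * exp (-2 * ℓ u) * η i j * pd m ℓ u := by
    have hgij : (fun v => g v i j) =ᶠ[𝓝 u] fun v => exp (-2 * ℓ v) * η i j :=
      hg.mono fun v hv => by simp [hv]
    have hexp : HasDerivAt (fun t => exp (-2 * t) * η i j) (exp (-2 * ℓ u) * (-2 * 1) * η i j)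
        (ℓ u) := (((hasDerivAt_id (ℓ u)).const_mul (-2)).exp).mul_const _
    rw [pd_congr hgij, pd_comp hexp hℓ]
    ring
  have hinv : (g u)⁻¹ = (exp (-2 * ℓ u))⁻¹ • η⁻¹ := by
    rw [hg.self_of_nhds]
    exact Matrix.inv_smul' η (Units.mk0 _ (exp_ne_zero _)) hdet
  have hdelta (i : Fin 4) : ∑ l, η⁻¹ k l * η i l = (1 : Matrix (Fin 4) (Fin 4) ℝ) k i := by
    rw [← nonsing_inv_mul η hdet, mul_apply]
    exact Finset.sum_congr rfl fun l _ => by rw [hη.apply]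
  have hsummand (l : Fin 4) : (g u)⁻¹ k l * (pd i (fun v => g v j l) u
      + pd j (fun v => g v i l) u - pd l (fun v => g v i j) u) =
      2 * (η i j * (η⁻¹ k l * grad ℓ u l) - η⁻¹ k l * η i l * grad ℓ u j
        - η⁻¹ k l * η j l * grad ℓ u i) := by
    simp only [hpd, hinv, Matrix.smul_apply, smul_eq_mul, grad]
    field_simp
    ring
  rw [christoffel, Finset.sum_congr rfl fun l _ => hsummand l, conformalSymbol_apply,
    ← Finset.mul_sum, Finset.sum_sub_distrib, Finset.sum_sub_distrib, ← Finset.mul_sum,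
    ← Finset.sum_mul, ← Finset.sum_mul, hdelta, hdelta, mulVec, dotProduct]
  ring

theorem pd_christoffel_eq_conformalSymbol (hη : η.IsSymm) (hdet : IsUnit η.det)
    (hℓ : ContDiffAt ℝ 2 ℓ u) (hg : g =ᶠ[𝓝 u] fun v => exp (-2 * ℓ v) • η) (m k i j : Fin 4) :
    pd m (christoffel g k i j) u = conformalSymbol η k i j (hess ℓ u m) := by
  have hΓ : christoffel g k i j =ᶠ[𝓝 u] fun v => conformalSymbol η k i j (grad ℓ v) := by
    filter_upwards [hℓ.eventually (by simp), hg.eventually_nhds] with v hℓv hgv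
    exact christoffel_eq_conformalSymbol hη hdet (hℓv.differentiableAt two_ne_zero) hgv k i j
  rw [pd_congr hΓ, pd_linearMap_comp _ (differentiableAt_grad hℓ)]
  rfl

theorem ricci_conformallyFlat (hη : η.IsSymm) (hdet : IsUnit η.det)
    (hℓ : ContDiffAt ℝ 2 ℓ u) (hg : g =ᶠ[𝓝 u] fun v => exp (-2 * ℓ v) • η) (i k : Fin 4) :
    ricci g i k u = 2 * (hess ℓ u i k + grad ℓ u i * grad ℓ u k) +
      η i k * ((η⁻¹ * hess ℓ u).trace - 2 * (grad ℓ u ⬝ᵥ η⁻¹ *ᵥ grad ℓ u)) := by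
  simp only [ricci, riemann, pd_christoffel_eq_conformalSymbol hη hdet hℓ hg,
    christoffel_eq_conformalSymbol hη hdet (hℓ.differentiableAt two_ne_zero) hg]
  rw [sum_ricci_conformalSymbol hη hdet (hess_isSymm hℓ), Fintype.card_fin]
  norm_num

theorem hess_exp_eq_smul_of_ricci_eq_zero (hη : η.IsSymm) (hdet : IsUnit η.det)
    (hℓ : ContDiffAt ℝ 2 ℓ u) (hg : g =ᶠ[𝓝 u] fun v => exp (-2 * ℓ v) • η)
    (hRic : ∀ i k, ricci g i k u = 0) :
    hess (fun v => exp (ℓ v)) u =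
      (exp (ℓ u) * (grad ℓ u ⬝ᵥ η⁻¹ *ᵥ grad ℓ u) / 2) • η := by
  rw [hess_exp hℓ, add_vecMulVec_eq_smul_of_ricci_eq_zero hdet (by simp), smul_smul, mul_div_assoc]
  ext i k
  have := hRic i k
  rw [ricci_conformallyFlat hη hdet hℓ hg] at this
  simp only [Fintype.card_fin, Nat.cast_ofNat, Matrix.add_apply, Matrix.smul_apply,
    vecMulVec_apply, Matrix.zero_apply, smul_eq_mul]
  linear_combination this

theorem exists_exp_eq_quadratic_of_ricci_eq_zero (hη : η.IsSymm) (hdet : IsUnit η.det)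
    {U : Set (Fin 4 → ℝ)} (hU : IsOpen U) (hUconn : IsPreconnected U) (hℓ : ContDiffOn ℝ 3 ℓ U)
    (hg : ∀ u ∈ U, g u = exp (-2 * ℓ u) • η) (hRic : ∀ u ∈ U, ∀ i k, ricci g i k u = 0) :
    ∃ (m : ℝ) (b : Fin 4 → ℝ) (c : ℝ), b ⬝ᵥ η⁻¹ *ᵥ b = 2 * c * m ∧
      ∀ u ∈ U, exp (ℓ u) = m / 2 * (u ⬝ᵥ η *ᵥ u) + b ⬝ᵥ u + c := by
  obtain rfl | ⟨u, hu⟩ := U.eq_empty_or_nonempty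
  · exact ⟨0, 0, 0, by simp, by simp⟩
  have hℓ₂ (v) (hv : v ∈ U) : ContDiffAt ℝ 2 ℓ v :=
    (hℓ.contDiffAt (hU.mem_nhds hv)).of_le (by norm_num)
  have hgrad (v) (hv : v ∈ U) : DifferentiableAt ℝ (grad ℓ) v := differentiableAt_grad (hℓ₂ v hv)
  have hμ : DifferentiableOn ℝ (fun v => exp (ℓ v) * (grad ℓ v ⬝ᵥ η⁻¹ *ᵥ grad ℓ v) / 2) U := by
    intro v hv
    have hdiff (i : Fin 4) : DifferentiableAt ℝ (fun w => grad ℓ w i) v :=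
      differentiableAt_pi.1 (hgrad v hv) i
    have := (hℓ₂ v hv).differentiableAt two_ne_zero
    simp only [dotProduct, mulVec]
    exact DifferentiableAt.differentiableWithinAt (by fun_prop)
  obtain ⟨m, b, c, hmbc⟩ := exists_eq_quadratic_of_hess_eq_smul hη hdet hU hUconn hℓ.exp hμ
    fun v hv => hess_exp_eq_smul_of_ricci_eq_zero hη hdet (hℓ₂ v hv)
      (eventually_of_mem (hU.mem_nhds hv) hg) (hRic v hv)
  refine ⟨m, b, c, ?_, fun v hv => (hmbc v hv).2.2⟩
  obtain ⟨hm, hgradL, hL⟩ := hmbc u hu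
  rw [grad_exp ((hℓ₂ u hu).differentiableAt two_ne_zero)] at hgradL
  have hnorm := dotProduct_inv_mulVec_smul_add hη hdet m u b
  rw [← hgradL, mulVec_smul, smul_dotProduct, dotProduct_smul, smul_eq_mul, smul_eq_mul] at hnorm
  linear_combination -hnorm + 2 * exp (ℓ u) * hm + 2 * m * hL

end ConformallyFlat

section LychaginRubtsov

/-- The flat metric `2(dx dp + dy dq)` of signature `(2, 2)`, to which the reduced
Lychagin–Rubtsov metrics are conformal. -/
def lightConeForm : Matrix (Fin 4) (Fin 4) ℝ :=
  !![0, 0, 1, 0;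
     0, 0, 0, 1;
     1, 0, 0, 0;
     0, 1, 0, 0]

theorem GD_eq_smul (D : (Fin 4 → ℝ) → ℝ) (u : Fin 4 → ℝ) : GD D u = D u • lightConeForm := by
  simp [GD, lightConeForm]

theorem lightConeForm_isSymm : lightConeForm.IsSymm := by
  ext i j
  fin_cases i <;> fin_cases j <;> rfl

theorem lightConeForm_mul_self : lightConeForm * lightConeForm = 1 := by
  ext i j
  fin_cases i <;> fin_cases j <;> simp [lightConeForm, mul_apply, Fin.sum_univ_four]

theorem dotProduct_lightConeForm_mulVec (v : Fin 4 → ℝ) :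
    v ⬝ᵥ lightConeForm *ᵥ v = 2 * (v 0 * v 2 + v 1 * v 3) := by
  simp only [dotProduct, mulVec, lightConeForm, of_apply, cons_val', cons_val_fin_one,
    Fin.sum_univ_four, Fin.isValue, cons_val_zero, cons_val_one, cons_val, zero_mul, add_zero,
    one_mul, zero_add]
  ring

end LychaginRubtsov

theorem plucker_of_ricci_flat_general {U : Set (Fin 4 → ℝ)} (hU : IsOpen U)
    (hUconn : IsPreconnected U) {D : (Fin 4 → ℝ) → ℝ} (hD : ContDiffOn ℝ 3 D U)
    (hDpos : ∀ u ∈ U, 0 < D u) (hRic : ∀ u ∈ U, ∀ i k : Fin 4, ricci (GD D) i k u = 0) :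
    ∃ c₁ c₂ c₃ c₄ c₅ c₆ : ℝ, c₂ * c₄ + c₃ * c₅ - c₁ * c₆ = 0 ∧
      ∀ u ∈ U,
        (c₁ + c₂ * u 0 + c₃ * u 1 + c₄ * u 2 + c₅ * u 3 +
            c₆ * (u 0 * u 2 + u 1 * u 3)) ≠ 0 ∧
        D u = ((c₁ + c₂ * u 0 + c₃ * u 1 + c₄ * u 2 + c₅ * u 3 +
            c₆ * (u 0 * u 2 + u 1 * u 3)) ^ 2)⁻¹ := by
  have hlog : ContDiffOn ℝ 3 (fun u => -log (D u) / 2) U :=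
    (hD.log fun u hu => (hDpos u hu).ne').neg.div_const 2
  have hexp (u) (hu : u ∈ U) : D u = exp (-2 * (-log (D u) / 2)) := by
    rw [neg_div, neg_mul_neg, mul_div_cancel₀ _ two_ne_zero, exp_log (hDpos u hu)]
  have hdet : IsUnit lightConeForm.det := isUnit_det_of_right_inverse lightConeForm_mul_self
  obtain ⟨m, b, c, hbc, hL⟩ := exists_exp_eq_quadratic_of_ricci_eq_zero lightConeForm_isSymm hdet
    hU hUconn hlog (fun u hu => by rw [GD_eq_smul, ← hexp u hu]) hRic
  rw [inv_eq_right_inv lightConeForm_mul_self, dotProduct_lightConeForm_mulVec] at hbc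
  refine ⟨c, b 0, b 1, b 2, b 3, m, by linear_combination hbc / 2, fun u hu => ?_⟩
  have hLu : c + b 0 * u 0 + b 1 * u 1 + b 2 * u 2 + b 3 * u 3 + m * (u 0 * u 2 + u 1 * u 3) =
      exp (-log (D u) / 2) := by
    rw [hL u hu, dotProduct_lightConeForm_mulVec, dotProduct, Fin.sum_univ_four]
    ring
  rw [hLu]
  refine ⟨exp_ne_zero _, ?_⟩
  rw [← exp_nat_mul, ← exp_neg, Nat.cast_ofNat, ← neg_mul]
  exact hexp u hu

/-- If `D` is smooth and positive on a nonempty open connected set `U ⊆ ℝ⁴` and the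
Ricci tensor of the reduced Lychagin–Rubtsov metric `G_D` vanishes identically on `U`,
then `D = L⁻²` on `U` for some `L(x,y,p,q) = c₁ + c₂x + c₃y + c₄p + c₅q + c₆(xp + yq)`
which is nonzero on `U`, with `c₂c₄ + c₃c₅ − c₁c₆ = 0`.
Coordinates: `x = u 0`, `y = u 1`, `p = u 2`, `q = u 3`. -/
theorem plucker_of_ricci_flat (U : Set (Fin 4 → ℝ)) (hU : IsOpen U)
    (hUne : U.Nonempty) (hUconn : IsPreconnected U)
    (D : (Fin 4 → ℝ) → ℝ) (hD : ContDiffOn ℝ (⊤ : ℕ∞) D U) (hDpos : ∀ u ∈ U, 0 < D u)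
    (hRic : ∀ u ∈ U, ∀ i k : Fin 4, ricci (GD D) i k u = 0) :
    ∃ c₁ c₂ c₃ c₄ c₅ c₆ : ℝ, c₂ * c₄ + c₃ * c₅ - c₁ * c₆ = 0 ∧
      ∀ u ∈ U,
        (c₁ + c₂ * u 0 + c₃ * u 1 + c₄ * u 2 + c₅ * u 3 +
            c₆ * (u 0 * u 2 + u 1 * u 3)) ≠ 0 ∧
        D u = ((c₁ + c₂ * u 0 + c₃ * u 1 + c₄ * u 2 + c₅ * u 3 +
            c₆ * (u 0 * u 2 + u 1 * u 3)) ^ 2)⁻¹ := by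
  exact plucker_of_ricci_flat_general hU hUconn (hD.of_le (by norm_cast)) hDpos hRic
end

section
/- Let A, B, C, D, E, f_xx, f_xy, f_yy ∈ ℝ satisfy the Monge–Ampère relation A f_xx + 2B f_xy + C f_yy + D (f_xx f_yy − f_xy²) + E = 0, and let G* be the symmetric 2×2 real matrix [[2C + 2D f_xx, −2B + 2D f_xy], [−2B + 2D f_xy, 2A + 2D f_yy]]. Then every eigenvalue λ ∈ ℝ of G* satisfies the quadratic equation λ² − λ (2C + 2A + 2D f_yy + 2D f_xx) − 4(B² − AC) − 4DE = 0; equivalently, the characteristic polynomial of G* is X² − 2(A + C + D(f_xx + f_yy)) X + 4(AC − B² − DE). -/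
open Polynomial Matrix

/-! The matrix `M = [[2C, -2B], [-2B, 2A]]` has adjugate `[[2A, 2B], [2B, 2C]]`, so expanding
`det (M + 2D Hess f)` through the adjugate of `M` produces the second-order part of the
Monge–Ampère operator, multiplied by `4D`. On solutions `det G*` therefore no longer depends on
the Hessian, which enters the characteristic polynomial only through the trace. -/

theorem isRoot_charpoly_of_mulVec_eq_smul {R n : Type*} [CommRing R] [IsDomain R] [Fintype n]
    [DecidableEq n] {M : Matrix n n R} {μ : R} {v : n → R} (hv : v ≠ 0) (h : M *ᵥ v = μ • v) :
    M.charpoly.IsRoot μ := by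
  have hμ : Module.End.HasEigenvector (toLin' M) μ v := ⟨Module.End.mem_eigenspace_iff.mpr h, hv⟩
  rw [← charpoly_toLin', ← Module.End.hasEigenvalue_iff_isRoot_charpoly]
  exact Module.End.hasEigenvalue_of_hasEigenvector hμ

theorem det_add_fin_two {R : Type*} [CommRing R] (M N : Matrix (Fin 2) (Fin 2) R) :
    (M + N).det = M.det + (M.adjugate * N).trace + N.det := by
  simp only [det_fin_two, adjugate_fin_two, trace_fin_two, mul_apply, Fin.sum_univ_two,
    Matrix.add_apply, of_apply, cons_val_zero, cons_val_one, cons_val', cons_val_fin_one]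
  ring

section PullbackMetric

variable {R : Type*} [CommRing R]

/-- The left-hand side of the Monge–Ampère equation with coefficients `A, B, C, D, E`, as a function
of the Hessian matrix `H`. The term `2B f_xy` is written symmetrically as `B (H 0 1 + H 1 0)`, so
that `H` need not be assumed symmetric. -/
def mongeAmpere (A B C D E : R) (H : Matrix (Fin 2) (Fin 2) R) : R :=
  A * H 0 0 + B * (H 0 1 + H 1 0) + C * H 1 1 + D * H.det + E

/-- The coordinate matrix of the pullback of the Lychagin–Rubtsov metric along a section `df`, as a
function of the Hessian matrix `H` of `f`. -/
def pullbackMetric (A B C D : R) (H : Matrix (Fin 2) (Fin 2) R) : Matrix (Fin 2) (Fin 2) R :=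
  !![2 * C, -2 * B; -2 * B, 2 * A] + (2 * D) • H

variable (A B C D E : R) (H : Matrix (Fin 2) (Fin 2) R)

theorem trace_pullbackMetric :
    (pullbackMetric A B C D H).trace = 2 * (A + C + D * H.trace) := by
  rw [pullbackMetric, trace_add, trace_smul, trace_fin_two_of, smul_eq_mul]
  ring

theorem det_pullbackMetric :
    (pullbackMetric A B C D H).det =
      4 * (A * C - B ^ 2 - D * E) + 4 * D * mongeAmpere A B C D E H := by
  have h_linear : (adjugate !![2 * C, -2 * B; -2 * B, 2 * A] * ((2 * D) • H)).trace =
      4 * D * (A * H 0 0 + B * (H 0 1 + H 1 0) + C * H 1 1) := by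
    rw [adjugate_fin_two_of, Matrix.mul_smul, trace_smul, smul_eq_mul]
    simp only [trace_fin_two, mul_apply, Fin.sum_univ_two, of_apply, cons_val_zero, cons_val_one,
      cons_val', cons_val_fin_one]
    ring
  rw [pullbackMetric, det_add_fin_two, h_linear, det_fin_two_of, det_smul, Fintype.card_fin,
    mongeAmpere]
  ring

variable {A B C D E H}

theorem charpoly_pullbackMetric [Nontrivial R] (hMA : mongeAmpere A B C D E H = 0) :
    (pullbackMetric A B C D H).charpoly =
      X ^ 2 - Polynomial.C (2 * (A + C + D * H.trace)) * X +
        Polynomial.C (4 * (A * C - B ^ 2 - D * E)) := by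
  rw [charpoly_fin_two, trace_pullbackMetric, det_pullbackMetric A B C D E, hMA, mul_zero, add_zero]

theorem eigenvalue_pullbackMetric [IsDomain R] (hMA : mongeAmpere A B C D E H = 0) {μ : R}
    {v : Fin 2 → R} (hv : v ≠ 0) (h : pullbackMetric A B C D H *ᵥ v = μ • v) :
    μ ^ 2 - 2 * (A + C + D * H.trace) * μ + 4 * (A * C - B ^ 2 - D * E) = 0 := by
  have hroot := isRoot_charpoly_of_mulVec_eq_smul hv h
  simpa only [charpoly_pullbackMetric hMA, IsRoot.def, eval_add, eval_sub, eval_mul, eval_pow,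
    eval_X, eval_C] using hroot

theorem eigenvalues_pullback_metric_general [IsDomain R] {fxx fxy fyy : R}
    (hMA : A * fxx + 2 * B * fxy + C * fyy + D * (fxx * fyy - fxy ^ 2) + E = 0)
    {G : Matrix (Fin 2) (Fin 2) R}
    (hG : G = !![2 * C + 2 * D * fxx, -2 * B + 2 * D * fxy;
        -2 * B + 2 * D * fxy, 2 * A + 2 * D * fyy]) :
    (∀ μ : R, (∃ v : Fin 2 → R, v ≠ 0 ∧ G *ᵥ v = μ • v) →
      μ ^ 2 - μ * (2 * C + 2 * A + 2 * D * fyy + 2 * D * fxx)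
        - 4 * (B ^ 2 - A * C) - 4 * D * E = 0) ∧
    G.charpoly = X ^ 2 - Polynomial.C (2 * (A + C + D * (fxx + fyy))) * X +
      Polynomial.C (4 * (A * C - B ^ 2 - D * E)) := by
  let H : Matrix (Fin 2) (Fin 2) R := !![fxx, fxy; fxy, fyy]
  have hG' : G = pullbackMetric A B C D H := by
    simp [hG, H, pullbackMetric]
  have hMA' : mongeAmpere A B C D E H = 0 := by
    simp only [mongeAmpere, H, det_fin_two_of, of_apply, cons_val_zero, cons_val_one, cons_val',
      cons_val_fin_one]
    linear_combination hMA
  have htrace : H.trace = fxx + fyy := trace_fin_two_of fxx fxy fxy fyy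
  rw [hG', ← htrace]
  refine ⟨?_, charpoly_pullbackMetric hMA'⟩
  rintro μ ⟨v, hv, h⟩
  linear_combination eigenvalue_pullbackMetric hMA' hv h + 2 * D * μ * htrace

end PullbackMetric

/-- If the Monge–Ampère relation `A fxx + 2B fxy + C fyy + D(fxx fyy − fxy²) + E = 0`
holds, then every real eigenvalue `λ` of the pullback-metric matrix
`G* = [[2C, −2B], [−2B, 2A]] + 2D Hess(f)` satisfies
`λ² − λ(2C + 2A + 2D fyy + 2D fxx) − 4(B² − AC) − 4DE = 0`; equivalently, the
characteristic polynomial of `G*` is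
`X² − 2(A + C + D(fxx + fyy)) X + 4(AC − B² − DE)`. -/
theorem eigenvalues_pullback_metric (A B C D E fxx fxy fyy : ℝ)
    (hMA : A * fxx + 2 * B * fxy + C * fyy + D * (fxx * fyy - fxy ^ 2) + E = 0)
    (G : Matrix (Fin 2) (Fin 2) ℝ)
    (hG : G = !![2 * C + 2 * D * fxx, -2 * B + 2 * D * fxy;
        -2 * B + 2 * D * fxy, 2 * A + 2 * D * fyy]) :
    (∀ lam : ℝ, (∃ v : Fin 2 → ℝ, v ≠ 0 ∧ G.mulVec v = lam • v) →
      lam ^ 2 - lam * (2 * C + 2 * A + 2 * D * fyy + 2 * D * fxx)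
        - 4 * (B ^ 2 - A * C) - 4 * D * E = 0) ∧
    G.charpoly = X ^ 2 - Polynomial.C (2 * (A + C + D * (fxx + fyy))) * X +
      Polynomial.C (4 * (A * C - B ^ 2 - D * E)) :=
  eigenvalues_pullback_metric_general hMA hG
end
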